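/- arXiv:1912.08951 — 2 statements merged into one kernel-verified Lean document; each statement's English description precedes it below -/
import Mathlib

section
/- There is a constant C > 0 such that the following holds for all c, d, m, n ∈ ℕ with m < n and all ε > 0. If there exists an ε-differentially private protocol for the 1-out-of-2^d-parity task with string length c in the (m,n)-hybrid model, succeeding with probability at least 3/4 on every instance, with the curator-first-then-one-local-round communication pattern, then n ≥ C·c·2^d/(d·ε). -/
open scoped ENNReal

/-- Two databases of size `m` are neighboring if they differ in at most one entry. -/
def Neighbor {X : Type*} {m : ℕ} (x x' : Fin m → X) : Prop :=
  ∃ i : Fin m, ∀ j : Fin m, j ≠ i → x j = x' j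

/-- The probability that a sample from `P` lands in the set `T`. -/
noncomputable def prOf {Y : Type*} (P : PMF Y) (T : Set Y) : ℝ≥0∞ :=
  P.toOuterMeasure T

/-- `ε`-differential privacy for a mechanism operating on databases of size `m`. -/
def DPAlg {X Y : Type*} {m : ℕ} (ε : ℝ) (A : (Fin m → X) → PMF Y) : Prop :=
  ∀ x x' : Fin m → X, Neighbor x x' → ∀ T : Set Y,
    prOf (A x) T ≤ ENNReal.ofReal (Real.exp ε) * prOf (A x') T

/-- `ε`-differential privacy for a local randomizer. -/
def DPRand {X Y : Type*} (ε : ℝ) (R : X → PMF Y) : Prop :=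
  ∀ x x' : X, ∀ T : Set Y,
    prOf (R x) T ≤ ENNReal.ofReal (Real.exp ε) * prOf (R x') T

/-- `m` i.i.d. samples from the distribution `D`. -/
noncomputable def iid {Z : Type*} (D : PMF Z) : (m : ℕ) → PMF (Fin m → Z)
  | 0 => PMF.pure (fun i => i.elim0)
  | m + 1 => (iid D m).bind fun f => D.bind fun z => PMF.pure (Fin.cons z f)

/-- Independent product of finitely many PMFs. -/
noncomputable def pmfPi : (n : ℕ) → {T : Fin n → Type} → (∀ i, PMF (T i)) → PMF (∀ i, T i)
  | 0, _, _ => PMF.pure (fun i => i.elim0)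
  | n + 1, T, P =>
      (P 0).bind fun t0 =>
        (@pmfPi n (fun i => T i.succ) (fun i => P i.succ)).bind fun ts =>
          PMF.pure (Fin.cons t0 ts)

/-- XOR of a finite family of bits. -/
def xorFold {I : Type*} [Fintype I] (f : I → Bool) : Bool :=
  decide ((Finset.univ.filter (fun i => f i = true)).card % 2 = 1)

/-- The parity function `Par_k(x) = ⊕ k_i x_i`. -/
def Par {c : ℕ} (k x : Fin c → Bool) : Bool := xorFold (fun i => k i && x i)

/-- Interpret a bit string as an integer in `{0, …, 2^b − 1}`. -/
def bitsToNat {b : ℕ} (y : Fin b → Bool) : ℕ :=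
  ∑ i : Fin b, if y i then 2 ^ (i : ℕ) else 0

/-- The threshold function `Thr_t(y) = 1` iff `y ≥ t`. -/
def Thr {b : ℕ} (t y : Fin b → Bool) : Bool := decide (bitsToNat t ≤ bitsToNat y)

/-- Generalization error of hypothesis `h` w.r.t. target `c` under distribution `D`. -/
noncomputable def errD {Z L : Type*} (D : PMF Z) (c h : Z → L) : ℝ≥0∞ :=
  prOf D {z | h z ≠ c z}

/-- `(α, β)`-PAC learning for the concept class `C` with sample complexity `m`:
for every concept in `C` and distribution `D` on the domain, when the `m` examples are drawn
i.i.d. from `D` and labeled by the concept, with probability at least `1 − β` the output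
hypothesis has generalization error at most `α`. -/
def PACLearner {Z L : Type*} {m : ℕ} (α β : ℝ) (C : Set (Z → L))
    (A : (Fin m → Z × L) → PMF (Z → L)) : Prop :=
  ∀ c ∈ C, ∀ D : PMF Z,
    ENNReal.ofReal (1 - β) ≤
      prOf ((iid D m).bind fun s => A (fun i => (s i, c (s i))))
        {h | errD D c h ≤ ENNReal.ofReal α}

/-- A data point of the 1-out-of-`2^d`-parity task: either `(x, (⟨x,r_j⟩)_j)` or `(t, s_t)`. -/
abbrev ParPoint (c d m : ℕ) : Type :=
  ((Fin c → Bool) × ((Fin d → Bool) → Bool)) ⊕ (Fin (m + 1) × (Fin d → Bool))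

/-- The secret index `s = s_1 ⊕ ⋯ ⊕ s_{m+1}` determined by the shares. -/
def sOf {d m : ℕ} (sh : Fin (m + 1) → Fin d → Bool) : Fin d → Bool :=
  fun j => xorFold fun t => sh t j

/-- The data-point distribution of the 1-out-of-`2^d`-parity task. -/
noncomputable def oneOutDist (c d m : ℕ) (r : (Fin d → Bool) → Fin c → Bool)
    (sh : Fin (m + 1) → Fin d → Bool) : PMF (ParPoint c d m) :=
  (PMF.uniformOfFintype Bool).bind fun flip =>
    if flip then
      (PMF.uniformOfFintype (Fin c → Bool)).map fun x => Sum.inl (x, fun j => Par (r j) x)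
    else
      (PMF.uniformOfFintype (Fin (m + 1))).map fun t => Sum.inr (t, sh t)

/-!
By averaging, the coins and the randomness behind all data points can be fixed. The curator's `m`
samples then miss one of the `m + 1` shares, so the secret `s` can be made uniformly random and
independent of the curator's view by changing that share. The answers of the agents that hold
shares do not depend on `r` and can be drawn afresh once `s` is known. Hence the transcript for one
fixed choice of shares is a message about the table `r` from which every entry `r s` can be decoded,
with probability `3 / 4` on average over `s` and `r`. By privacy the likelihoods of this message for
different `r` are within a factor `exp ((m + n) * ε)` of each other.

Such a random access code is bounded by a change of measure to a message independent of `r`, for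
which the `2 ^ d` decodings are independent guesses. With the exponent `l = c * log (3 / 2)` this
gives `2 ^ d * (3 / 4 * l) ≤ (m + n) * ε + 2 ^ d * ((3 / 4) ^ c - (1 / 2) ^ c)`, and
`(3 / 4) ^ c - (1 / 2) ^ c ≤ c / 4`.
-/

open scoped NNReal symmDiff
open PMF (uniformOfFintype)

section Mean

variable {α β I : Type*}

/-- The mean of the nonnegative function `f` under the discrete distribution `p`. Since
`(p.bind g) b` is by definition `mean p (g · b)`, probabilities under a `bind` are such means. -/
noncomputable def mean (p : PMF α) (f : α → ℝ≥0∞) : ℝ≥0∞ := ∑' a, p a * f a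

theorem mean_const (p : PMF α) (x : ℝ≥0∞) : mean p (fun _ => x) = x := by
  rw [mean, ENNReal.tsum_mul_right, p.tsum_coe, one_mul]

theorem mean_mono (p : PMF α) {f g : α → ℝ≥0∞} (h : ∀ a, f a ≤ g a) : mean p f ≤ mean p g :=
  ENNReal.tsum_le_tsum fun a => mul_le_mul_right (h a) (p a)

theorem mean_le_mul_mean {p q : PMF α} {M : ℝ≥0∞} (h : ∀ a, p a ≤ M * q a) (f : α → ℝ≥0∞) :
    mean p f ≤ M * mean q f := by
  simp only [mean, ← ENNReal.tsum_mul_left, ← mul_assoc]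
  exact ENNReal.tsum_le_tsum fun a => mul_le_mul_left (h a) (f a)

theorem mean_add (p : PMF α) (f g : α → ℝ≥0∞) :
    mean p (fun a => f a + g a) = mean p f + mean p g := by
  simp only [mean, mul_add, ENNReal.tsum_add]

theorem mean_const_mul (p : PMF α) (x : ℝ≥0∞) (f : α → ℝ≥0∞) :
    mean p (fun a => x * f a) = x * mean p f := by
  simp only [mean, mul_left_comm _ x, ENNReal.tsum_mul_left]

theorem mean_finsetSum (p : PMF α) (s : Finset I) (f : I → α → ℝ≥0∞) :
    mean p (fun a => ∑ i ∈ s, f i a) = ∑ i ∈ s, mean p (f i) := by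
  simp only [mean, Finset.mul_sum, Summable.tsum_finsetSum fun _ _ => ENNReal.summable]

theorem mean_comm (p : PMF α) (q : PMF β) (f : α → β → ℝ≥0∞) :
    mean p (fun a => mean q (f a)) = mean q fun b => mean p fun a => f a b := by
  simp only [mean, ← ENNReal.tsum_mul_left]
  rw [ENNReal.tsum_comm]
  simp only [mul_left_comm]

theorem exists_le_of_le_mean {p : PMF α} {f : α → ℝ≥0∞} {x : ℝ≥0∞} (hx : x ≠ ∞)
    (h : x ≤ mean p f) : ∃ a, x ≤ f a := by
  by_contra! hlt
  obtain ⟨a, ha⟩ := p.support_nonempty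
  have hfin : mean p f ≠ ∞ :=
    ne_top_of_le_ne_top hx ((mean_mono p fun a => (hlt a).le).trans_eq (mean_const p x))
  have hmean : mean p f < mean p fun _ => x :=
    ENNReal.tsum_lt_tsum hfin (fun a => mul_le_mul_right (hlt a).le (p a))
      (ENNReal.mul_lt_mul_right ((p.mem_support_iff a).1 ha) (p.apply_ne_top a) (hlt a))
  exact (h.trans_lt hmean).ne (mean_const p x).symm

theorem exists_le_mean_of_le_mean_bind {π : PMF I} {D : PMF α} {F : I → α → PMF β} {g : I → β}
    {x : ℝ≥0∞} (hx : x ≠ ∞) (h : x ≤ mean π fun i => (D.bind (F i)) (g i)) :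
    ∃ a, x ≤ mean π fun i => F i a (g i) :=
  exists_le_of_le_mean hx (h.trans_eq (mean_comm π D _))

theorem map_equiv_apply (p : PMF α) (e : α ≃ β) (b : β) : p.map e b = p (e.symm b) := by
  classical
  rw [PMF.map_apply, tsum_eq_single (e.symm b), if_pos (e.apply_symm_apply b).symm]
  exact fun a ha => if_neg fun h => ha (e.symm_apply_eq.2 h).symm

theorem bind_map_prodMk_apply (p : PMF α) (q : α → PMF β) (w : α × β) :
    (p.bind fun a => (q a).map (Prod.mk a)) w = p w.1 * q w.1 w.2 := by
  classical
  obtain ⟨a, b⟩ := w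
  rw [PMF.bind_apply, tsum_eq_single a, PMF.map_apply, tsum_eq_single b, if_pos rfl]
  · intro b' hb
    exact if_neg fun h => hb (Prod.ext_iff.1 h).2.symm
  · intro a' ha
    rw [PMF.map_apply, ENNReal.tsum_eq_zero.2, mul_zero]
    exact fun b' => if_neg fun h => ha (Prod.ext_iff.1 h).1.symm

theorem mean_bind_map_prodMk (p : PMF α) (q : α → PMF β) (f : α × β → ℝ≥0∞) :
    mean (p.bind fun a => (q a).map (Prod.mk a)) f =
      mean p fun a => mean (q a) fun b => f (a, b) := by
  simp only [mean, bind_map_prodMk_apply, ENNReal.tsum_prod', ← ENNReal.tsum_mul_left, mul_assoc]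

end Mean

section Uniform

variable {α β I : Type*} [Fintype α] [Nonempty α] [Fintype β] [Nonempty β]

theorem mean_uniformOfFintype (f : α → ℝ≥0∞) :
    mean (uniformOfFintype α) f = (Fintype.card α : ℝ≥0∞)⁻¹ * ∑ a, f a := by
  simp only [mean, PMF.uniformOfFintype_apply, tsum_fintype, Finset.mul_sum]

theorem mean_uniformOfFintype_comp_equiv (e : α ≃ β) (f : β → ℝ≥0∞) :
    mean (uniformOfFintype α) (fun a => f (e a)) = mean (uniformOfFintype β) f := by
  rw [mean_uniformOfFintype, mean_uniformOfFintype, e.sum_comp, Fintype.card_congr e]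

theorem mean_uniformOfFintype_prod (f : α × β → ℝ≥0∞) :
    mean (uniformOfFintype (α × β)) f =
      mean (uniformOfFintype α) fun a => mean (uniformOfFintype β) fun b => f (a, b) := by
  simp only [mean_uniformOfFintype, Fintype.card_prod, Fintype.sum_prod_type, Nat.cast_mul,
    ENNReal.mul_inv (.inr (ENNReal.natCast_ne_top _)) (.inl (ENNReal.natCast_ne_top _)),
    ← Finset.mul_sum, mul_assoc]

theorem mean_uniformOfFintype_pi_prod [Fintype I] [DecidableEq I] (f : I → α → ℝ≥0∞) :
    mean (uniformOfFintype (I → α)) (fun r => ∏ i, f i (r i)) =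
      ∏ i, mean (uniformOfFintype α) (f i) := by
  simp only [mean_uniformOfFintype, Finset.prod_mul_distrib, Fintype.prod_sum, Finset.prod_const,
    Fintype.card_pi, Nat.cast_pow, ENNReal.inv_pow, Finset.card_univ]

theorem mean_uniformOfFintype_coe (p : PMF α) :
    mean (uniformOfFintype α) p = (Fintype.card α : ℝ≥0∞)⁻¹ := by
  rw [mean_uniformOfFintype, ← tsum_fintype (L := .unconditional _), p.tsum_coe, mul_one]

end Uniform

section ChangeOfMeasure

variable {Ω : Type*} {P μ : PMF Ω} {K L : ℝ}

theorem nonneg_of_le_exp_mul (h : ∀ ω, P ω ≤ ENNReal.ofReal (Real.exp K) * μ ω) : 0 ≤ K := by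
  simpa only [mean_const, mul_one, ENNReal.one_le_ofReal, Real.one_le_exp_iff] using
    mean_le_mul_mean h fun _ => 1

/-- A form of the Gibbs variational principle, obtained by averaging the Legendre inequality
`x + 1 ≤ exp (x - a) + a` with `a = K + L`. -/
theorem mean_le_add_of_mean_exp_le (h : ∀ ω, P ω ≤ ENNReal.ofReal (Real.exp K) * μ ω)
    (f : Ω → ℝ≥0)
    (hf : mean μ (fun ω => ENNReal.ofReal (Real.exp (f ω))) ≤ ENNReal.ofReal (Real.exp L)) :
    mean P (fun ω => f ω) ≤ ENNReal.ofReal (K + L) := by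
  have legendre (x : ℝ≥0) : (x : ℝ≥0∞) + 1 ≤
      ENNReal.ofReal (Real.exp (-(K + L))) * ENNReal.ofReal (Real.exp x) +
        ENNReal.ofReal (K + L) := by
    rw [← ENNReal.ofReal_mul (Real.exp_nonneg _), ← Real.exp_add, ← ENNReal.ofReal_coe_nnreal,
      ← ENNReal.ofReal_one, ← ENNReal.ofReal_add x.coe_nonneg zero_le_one]
    refine (ENNReal.ofReal_le_ofReal ?_).trans ENNReal.ofReal_add_le
    linarith [Real.add_one_le_exp (-(K + L) + x)]
  refine ENNReal.le_of_add_le_add_right ENNReal.one_ne_top ?_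
  calc mean P (fun ω => f ω) + 1 = mean P fun ω => f ω + 1 := by rw [mean_add, mean_const]
    _ ≤ mean P fun ω => ENNReal.ofReal (Real.exp (-(K + L))) * ENNReal.ofReal (Real.exp (f ω)) +
          ENNReal.ofReal (K + L) := mean_mono P fun ω => legendre (f ω)
    _ = ENNReal.ofReal (Real.exp (-(K + L))) * mean P (fun ω => ENNReal.ofReal (Real.exp (f ω))) +
          ENNReal.ofReal (K + L) := by rw [mean_add, mean_const_mul, mean_const]
    _ ≤ ENNReal.ofReal (Real.exp (-(K + L))) *
          (ENNReal.ofReal (Real.exp K) * ENNReal.ofReal (Real.exp L)) +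
          ENNReal.ofReal (K + L) := by
        gcongr
        exact (mean_le_mul_mean h _).trans (mul_le_mul_right hf _)
    _ = ENNReal.ofReal (K + L) + 1 := by
        rw [← ENNReal.ofReal_mul (Real.exp_nonneg _), ← ENNReal.ofReal_mul (Real.exp_nonneg _),
          ← Real.exp_add, ← Real.exp_add, neg_add_cancel, Real.exp_zero, ENNReal.ofReal_one,
          add_comm]

/-- Change of measure from the joint distribution of a random `r` and a message `w` about it to the
product distribution, under which `w` is independent of `r`. -/
theorem mean_mean_le_add_of_mean_exp_le {R W : Type*} (U : PMF R) {P : R → PMF W} {μ : PMF W}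
    {K L : ℝ} (h : ∀ r w, P r w ≤ ENNReal.ofReal (Real.exp K) * μ w) (f : R → W → ℝ≥0)
    (hf : ∀ w, mean U (fun r => ENNReal.ofReal (Real.exp (f r w))) ≤ ENNReal.ofReal (Real.exp L)) :
    mean U (fun r => mean (P r) fun w => f r w) ≤ ENNReal.ofReal (K + L) := by
  let joint (Q : R → PMF W) : PMF (R × W) := U.bind fun r => (Q r).map (Prod.mk r)
  have joint_le (z : R × W) :
      joint P z ≤ ENNReal.ofReal (Real.exp K) * joint (fun _ => μ) z := by
    simp only [joint, bind_map_prodMk_apply, mul_left_comm _ (U z.1)]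
    exact mul_le_mul_right (h z.1 z.2) _
  rw [← mean_bind_map_prodMk U P fun z => f z.1 z.2]
  refine mean_le_add_of_mean_exp_le joint_le (fun z => f z.1 z.2) ?_
  rw [mean_bind_map_prodMk, mean_comm, ← mean_const μ (ENNReal.ofReal (Real.exp L))]
  exact mean_mono μ hf

end ChangeOfMeasure

section RandomAccessCode

variable {I A W : Type*} [Fintype A] [Nonempty A]

theorem exp_mul_le_one_add_mul {p : ℝ} (hp₀ : 0 ≤ p) (hp₁ : p ≤ 1) (l : ℝ) :
    Real.exp (l * p) ≤ 1 + (Real.exp l - 1) * p := by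
  have h := convexOn_exp.2 (Set.mem_univ 0) (Set.mem_univ l) (sub_nonneg.2 hp₁) hp₀ (by ring)
  simp only [smul_eq_mul, mul_zero, zero_add, Real.exp_zero, mul_one] at h
  rw [mul_comm l p]
  linarith

theorem mean_exp_mul_apply_le (p : PMF A) {l : ℝ} (hl : 0 ≤ l) :
    mean (uniformOfFintype A) (fun a => ENNReal.ofReal (Real.exp (l * (p a).toReal))) ≤
      ENNReal.ofReal (Real.exp ((Real.exp l - 1) / Fintype.card A)) := by
  have hl₁ : 0 ≤ Real.exp l - 1 := sub_nonneg.2 (Real.one_le_exp hl)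
  have hcard : (0 : ℝ) < Fintype.card A := Nat.cast_pos.2 Fintype.card_pos
  have chord (a : A) : ENNReal.ofReal (Real.exp (l * (p a).toReal)) ≤
      1 + ENNReal.ofReal (Real.exp l - 1) * p a := by
    have hp₁ : (p a).toReal ≤ 1 := ENNReal.toReal_le_of_le_ofReal zero_le_one <| by
      simpa only [ENNReal.ofReal_one] using p.coe_le_one a
    refine (ENNReal.ofReal_le_ofReal
      (exp_mul_le_one_add_mul ENNReal.toReal_nonneg hp₁ l)).trans_eq ?_
    rw [ENNReal.ofReal_add zero_le_one (mul_nonneg hl₁ ENNReal.toReal_nonneg), ENNReal.ofReal_one,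
      ENNReal.ofReal_mul hl₁, ENNReal.ofReal_toReal (p.apply_ne_top a)]
  calc mean (uniformOfFintype A) (fun a => ENNReal.ofReal (Real.exp (l * (p a).toReal)))
      ≤ mean (uniformOfFintype A) fun a => 1 + ENNReal.ofReal (Real.exp l - 1) * p a :=
        mean_mono _ chord
    _ = ENNReal.ofReal (1 + (Real.exp l - 1) / Fintype.card A) := by
        rw [mean_add, mean_const, mean_const_mul, mean_uniformOfFintype_coe,
          ENNReal.ofReal_add zero_le_one (div_nonneg hl₁ hcard.le), ENNReal.ofReal_one,
          ENNReal.ofReal_div_of_pos hcard, ENNReal.ofReal_natCast, div_eq_mul_inv]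
    _ ≤ ENNReal.ofReal (Real.exp ((Real.exp l - 1) / Fintype.card A)) := by
        rw [add_comm]
        exact ENNReal.ofReal_le_ofReal (Real.add_one_le_exp _)

variable [Fintype I] [DecidableEq I]

theorem mean_exp_mul_sum_apply_le (g : I → PMF A) {l : ℝ} (hl : 0 ≤ l) :
    mean (uniformOfFintype (I → A))
        (fun r => ENNReal.ofReal (Real.exp (l * ∑ i, (g i (r i)).toReal))) ≤
      ENNReal.ofReal (Real.exp (Fintype.card I * ((Real.exp l - 1) / Fintype.card A))) := by
  simp only [Finset.mul_sum, Real.exp_sum,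
    ENNReal.ofReal_prod_of_nonneg fun _ _ => Real.exp_nonneg _]
  rw [mean_uniformOfFintype_pi_prod fun i a => ENNReal.ofReal (Real.exp (l * (g i a).toReal)),
    Real.exp_nat_mul, ENNReal.ofReal_pow (Real.exp_nonneg _)]
  exact Finset.prod_le_pow_card _ _ _ fun i _ => mean_exp_mul_apply_le (g i) hl

/-- A bound for random access codes: `w` is a message about the table `r`, from which `G i` decodes
the entry `r i`. -/
theorem mul_card_le_of_le_mean_decode [Nonempty I] {P : (I → A) → PMF W} {μ : PMF W} {K l q : ℝ}
    (hP : ∀ r w, P r w ≤ ENNReal.ofReal (Real.exp K) * μ w) (hl : 0 ≤ l) (G : I → W → PMF A)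
    (hq : ENNReal.ofReal q ≤ mean (uniformOfFintype I) fun i =>
      mean (uniformOfFintype (I → A)) fun r => ((P r).bind (G i)) (r i)) :
    Fintype.card I * (q * l) ≤ K + Fintype.card I * ((Real.exp l - 1) / Fintype.card A) := by
  set L : ℝ := Fintype.card I * ((Real.exp l - 1) / Fintype.card A)
  let score (r : I → A) (w : W) : ℝ≥0 := l.toNNReal * ∑ i, (G i w (r i)).toNNReal
  have mean_exp_score (w : W) : mean (uniformOfFintype (I → A))
      (fun r => ENNReal.ofReal (Real.exp (score r w))) ≤ ENNReal.ofReal (Real.exp L) := by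
    simpa [score, hl, ENNReal.coe_toNNReal_eq_toReal] using
      mean_exp_mul_sum_apply_le (fun i => G i w) hl
  have score_eq (r : I → A) (w : W) :
      (score r w : ℝ≥0∞) = ENNReal.ofReal l * ∑ i, G i w (r i) := by
    simp [score, ENNReal.ofReal, PMF.apply_ne_top]
  have hcard : (Fintype.card I : ℝ≥0∞) * (Fintype.card I : ℝ≥0∞)⁻¹ = 1 :=
    ENNReal.mul_inv_cancel (Nat.cast_ne_zero.2 Fintype.card_ne_zero) (ENNReal.natCast_ne_top _)
  have hqL : ENNReal.ofReal (Fintype.card I * (q * l)) ≤ ENNReal.ofReal (K + L) :=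
    calc ENNReal.ofReal (Fintype.card I * (q * l))
        = ENNReal.ofReal l * (Fintype.card I * ENNReal.ofReal q) := by
          rw [ENNReal.ofReal_mul (Nat.cast_nonneg _), ENNReal.ofReal_mul' hl,
            ENNReal.ofReal_natCast, ← mul_assoc, mul_comm]
      _ ≤ ENNReal.ofReal l * (Fintype.card I * mean (uniformOfFintype I) fun i =>
            mean (uniformOfFintype (I → A)) fun r => ((P r).bind (G i)) (r i)) := by gcongr
      _ = ENNReal.ofReal l * ∑ i, mean (uniformOfFintype (I → A)) fun r =>
            mean (P r) fun w => G i w (r i) := by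
          rw [mean_uniformOfFintype (α := I), ← mul_assoc (_ : ℝ≥0∞) _⁻¹, hcard, one_mul]
          rfl
      _ = mean (uniformOfFintype (I → A)) fun r => mean (P r) fun w => score r w := by
          simp only [score_eq, mean_const_mul, mean_finsetSum]
      _ ≤ ENNReal.ofReal (K + L) := mean_mean_le_add_of_mean_exp_le _ hP score mean_exp_score
  have hL : 0 ≤ L := by
    have hexp : 1 ≤ Real.exp l := Real.one_le_exp hl
    positivity
  have hK : 0 ≤ K := nonneg_of_le_exp_mul (hP (Classical.arbitrary _))
  exact (ENNReal.ofReal_le_ofReal_iff (add_nonneg hK hL)).1 hqL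

end RandomAccessCode

section Privacy

variable {X Y : Type*} {ε : ℝ}

theorem prOf_singleton (p : PMF Y) (y : Y) : prOf p {y} = p y :=
  p.toOuterMeasure_apply_singleton y

theorem DPRand.apply_le {R : X → PMF Y} (h : DPRand ε R) (x x' : X) (y : Y) :
    R x y ≤ ENNReal.ofReal (Real.exp ε) * R x' y := by
  simpa only [prOf_singleton] using h x x' {y}

theorem DPAlg.apply_le {m : ℕ} {A : (Fin m → X) → PMF Y} (h : DPAlg ε A) (x x' : Fin m → X)
    (y : Y) : A x y ≤ ENNReal.ofReal (Real.exp ε) ^ m * A x' y := by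
  have hybrid (s : Finset (Fin m)) :
      A x y ≤ ENNReal.ofReal (Real.exp ε) ^ s.card * A (s.piecewise x' x) y := by
    induction s using Finset.induction_on with
    | empty => simp
    | insert i s hi ih =>
      have hstep : Neighbor (s.piecewise x' x) ((insert i s).piecewise x' x) :=
        ⟨i, fun j hj => by simp [Finset.piecewise, hj]⟩
      have hA := h _ _ hstep {y}
      rw [prOf_singleton, prOf_singleton] at hA
      rw [Finset.card_insert_of_notMem hi, pow_succ, mul_assoc]
      exact ih.trans (mul_le_mul_right hA _)
  simpa using hybrid Finset.univ

end Privacy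

section Product

theorem iid_map {α β : Type*} (D : PMF α) (f : α → β) (m : ℕ) :
    iid (D.map f) m = (iid D m).map (f ∘ ·) := by
  induction m with
  | zero => exact (congrArg PMF.pure (Subsingleton.elim _ _)).trans (PMF.pure_map _ _).symm
  | succ m ih =>
    simp only [iid, ih, PMF.map_bind, PMF.bind_map, PMF.pure_map, Function.comp_def]
    simp only [← Function.comp_def, Fin.comp_cons]

theorem pmfPi_bind (n : ℕ) {A B : Fin n → Type} (P : ∀ i, PMF (A i)) (k : ∀ i, A i → PMF (B i)) :
    pmfPi n (fun i => (P i).bind (k i)) = (pmfPi n P).bind fun a => pmfPi n fun i => k i (a i) := by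
  induction n with
  | zero => simp only [pmfPi, PMF.pure_bind]
  | succ n ih =>
    simp only [pmfPi, ih, PMF.bind_bind, PMF.pure_bind, Fin.cons_zero, Fin.cons_succ]
    congr 1; funext a
    rw [PMF.bind_comm]

theorem pmfPi_apply {n : ℕ} {A : Fin n → Type} (P : ∀ i, PMF (A i)) (a : ∀ i, A i) :
    pmfPi n P a = ∏ i, P i (a i) := by
  induction n with
  | zero =>
    rw [pmfPi, Subsingleton.elim a fun i => i.elim0, PMF.pure_apply_self, Fin.prod_univ_zero]
  | succ n ih =>
    have hjoint : pmfPi (n + 1) P = ((P 0).bind fun x =>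
        (pmfPi n fun i => P i.succ).map (Prod.mk x)).map (Fin.consEquiv A) := by
      simp only [pmfPi, PMF.map_bind, PMF.map_comp]
      rfl
    rw [hjoint, map_equiv_apply, bind_map_prodMk_apply, ih, Fin.prod_univ_succ]
    rfl

theorem pmfPi_apply_le {n : ℕ} {A : Fin n → Type} {P P' : ∀ i, PMF (A i)} {M : ℝ≥0∞}
    (h : ∀ i a, P i a ≤ M * P' i a) (a : ∀ i, A i) : pmfPi n P a ≤ M ^ n * pmfPi n P' a := by
  rw [pmfPi_apply, pmfPi_apply]
  calc ∏ i, P i (a i) ≤ ∏ i, M * P' i (a i) := Finset.prod_le_prod' fun i _ => h i (a i)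
    _ = M ^ n * ∏ i, P' i (a i) := by
        rw [Finset.prod_mul_distrib, Finset.prod_const, Finset.card_univ, Fintype.card_fin]

end Product

section Transcript

variable {X Tr Q B : Type*} {m n : ℕ} {Ai : Fin n → Type} {ε : ℝ}

/-- The joint distribution of the curator's transcript and the local agents' answers, on the
curator's database `xs` and the agents' data `ys`. -/
noncomputable def transcript (Cur : (Fin m → X) → PMF Tr) (query : Tr → Fin n → Q)
    (R : ∀ i, Q → X → PMF (Ai i)) (xs : Fin m → X) (ys : Fin n → X) : PMF (Tr × ∀ i, Ai i) :=
  (Cur xs).bind fun tr => (pmfPi n fun i => R i (query tr i) (ys i)).map (Prod.mk tr)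

variable {Cur : (Fin m → X) → PMF Tr} {query : Tr → Fin n → Q} {R : ∀ i, Q → X → PMF (Ai i)}

theorem transcript_bind (xs : Fin m → X) (ys : Fin n → X) (out : Tr → (∀ i, Ai i) → PMF B) :
    ((transcript Cur query R xs ys).bind fun w => out w.1 w.2) =
      (Cur xs).bind fun tr => (pmfPi n fun i => R i (query tr i) (ys i)).bind (out tr) := by
  simp only [transcript, PMF.bind_bind, PMF.bind_map, Function.comp_def]

theorem transcript_apply_le (hCur : DPAlg ε Cur) (hR : ∀ i q, DPRand ε (R i q))
    (xs xs' : Fin m → X) (ys ys' : Fin n → X) (w : Tr × ∀ i, Ai i) :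
    transcript Cur query R xs ys w ≤
      ENNReal.ofReal (Real.exp ((m + n) * ε)) * transcript Cur query R xs' ys' w := by
  have hexp : ENNReal.ofReal (Real.exp ((m + n) * ε)) =
      ENNReal.ofReal (Real.exp ε) ^ m * ENNReal.ofReal (Real.exp ε) ^ n := by
    rw [← pow_add, ← ENNReal.ofReal_pow (Real.exp_nonneg _), ← Real.exp_nat_mul, Nat.cast_add]
  simp only [transcript, bind_map_prodMk_apply]
  rw [hexp, mul_mul_mul_comm]
  exact mul_le_mul' (hCur.apply_le xs xs' w.1)
    (pmfPi_apply_le (fun i => (hR i _).apply_le (ys i) (ys' i)) w.2)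

theorem transcript_bind_resample (xs : Fin m → X) {ys ys' : Fin n → X}
    {k : Tr → ∀ i, Ai i → PMF (Ai i)}
    (hk : ∀ tr i, (R i (query tr i) (ys i)).bind (k tr i) = R i (query tr i) (ys' i))
    (out : Tr → (∀ i, Ai i) → PMF B) :
    ((transcript Cur query R xs ys).bind fun w =>
        (pmfPi n fun i => k w.1 i (w.2 i)).bind (out w.1)) =
      (transcript Cur query R xs ys').bind fun w => out w.1 w.2 := by
  rw [transcript_bind xs ys fun tr a => (pmfPi n fun i => k tr i (a i)).bind (out tr),
    transcript_bind]
  simp only [← hk, pmfPi_bind, PMF.bind_bind]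

end Transcript

section Shares

variable {I : Type*} [Fintype I] [DecidableEq I] {d m : ℕ}

theorem xorFold_eq_xor_erase (f : I → Bool) (t : I) :
    xorFold f = xor (f t) (decide (((Finset.univ.erase t).filter (f · = true)).card % 2 = 1)) := by
  have hcard : (Finset.univ.filter (f · = true)).card =
      (f t).toNat + ((Finset.univ.erase t).filter (f · = true)).card := by
    simp only [Finset.card_filter, ← Finset.add_sum_erase _ _ (Finset.mem_univ t)]
    cases f t <;> rfl
  rw [xorFold, hcard]
  cases f t <;> grind

theorem xorFold_update_symmDiff (f : I → Bool) (t : I) (b : Bool) :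
    xorFold (Function.update f t (f t ∆ b)) = xorFold f ∆ b := by
  have hrest : (Finset.univ.erase t).filter (Function.update f t (f t ∆ b) · = true) =
      (Finset.univ.erase t).filter (f · = true) :=
    Finset.filter_congr fun i hi => by rw [Function.update_of_ne (Finset.ne_of_mem_erase hi)]
  rw [xorFold_eq_xor_erase _ t, xorFold_eq_xor_erase f t, hrest, Function.update_self]
  simp only [Bool.symmDiff_eq_xor, Bool.xor_assoc, Bool.xor_comm b]

/-- The shares obtained from `sh` by changing the share `t` so that the secret becomes `s`. -/
def reshare (t : Fin (m + 1)) (s : Fin d → Bool) (sh : Fin (m + 1) → Fin d → Bool) :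
    Fin (m + 1) → Fin d → Bool :=
  Function.update sh t (sh t ∆ (sOf sh ∆ s))

theorem reshare_apply_of_ne {t t' : Fin (m + 1)} (h : t' ≠ t) (s : Fin d → Bool)
    (sh : Fin (m + 1) → Fin d → Bool) : reshare t s sh t' = sh t' :=
  Function.update_of_ne h _ _

theorem sOf_reshare (t : Fin (m + 1)) (s : Fin d → Bool) (sh : Fin (m + 1) → Fin d → Bool) :
    sOf (reshare t s sh) = s := by
  funext j
  have hcol : (fun i => reshare t s sh i j) =
      Function.update (fun i => sh i j) t (sh t j ∆ (sOf sh j ∆ s j)) := by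
    funext i
    by_cases hi : i = t <;> simp [reshare, hi]
  rw [sOf, hcol, xorFold_update_symmDiff (fun i => sh i j)]
  exact symmDiff_symmDiff_cancel_left (sOf sh j) (s j)

theorem reshare_sOf_reshare (t : Fin (m + 1)) (s : Fin d → Bool)
    (sh : Fin (m + 1) → Fin d → Bool) : reshare t (sOf sh) (reshare t s sh) = sh := by
  rw [reshare, sOf_reshare, reshare, Function.update_self, Function.update_idem,
    symmDiff_comm s, symmDiff_symmDiff_cancel_right, Function.update_eq_self]

/-- Exchanging the old secret for the new one is an involution. -/
theorem mean_uniformOfFintype_reshare (t : Fin (m + 1))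
    (f : (Fin (m + 1) → Fin d → Bool) → ℝ≥0∞) :
    mean (uniformOfFintype (Fin (m + 1) → Fin d → Bool))
        (fun sh => mean (uniformOfFintype (Fin d → Bool)) fun s => f (reshare t s sh)) =
      mean (uniformOfFintype (Fin (m + 1) → Fin d → Bool)) f := by
  let exchange (p : (Fin (m + 1) → Fin d → Bool) × (Fin d → Bool)) := (reshare t p.2 p.1, sOf p.1)
  have hinv : Function.Involutive exchange := fun p => by
    simp only [exchange, reshare_sOf_reshare, sOf_reshare]
  have hf := mean_uniformOfFintype_comp_equiv hinv.toPerm fun p => f p.1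
  simpa only [mean_uniformOfFintype_prod, mean_const, Function.Involutive.coe_toPerm] using hf

end Shares

section ParityTask

variable {c d m n : ℕ}

/-- The randomness behind a data point of the parity task: the vector `x` of a parity point or the
index `t` of a share point. -/
abbrev ParSource (c m : ℕ) : Type := (Fin c → Bool) ⊕ Fin (m + 1)

/-- The distribution of the randomness of a data point, which does not depend on the instance. -/
noncomputable def parSourceDist (c m : ℕ) : PMF (ParSource c m) :=
  (uniformOfFintype Bool).bind fun flip =>
    if flip then (uniformOfFintype (Fin c → Bool)).map Sum.inl
    else (uniformOfFintype (Fin (m + 1))).map Sum.inr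

/-- The data point of the instance `(r, sh)` with a given randomness. -/
def parPoint (r : (Fin d → Bool) → Fin c → Bool) (sh : Fin (m + 1) → Fin d → Bool) :
    ParSource c m → ParPoint c d m :=
  Sum.map (fun x => (x, fun j => Par (r j) x)) fun t => (t, sh t)

theorem oneOutDist_eq_map_parPoint (r : (Fin d → Bool) → Fin c → Bool)
    (sh : Fin (m + 1) → Fin d → Bool) :
    oneOutDist c d m r sh = (parSourceDist c m).map (parPoint r sh) := by
  simp only [oneOutDist, parSourceDist, PMF.map_bind, apply_ite (PMF.map _), PMF.map_comp]
  rfl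

theorem exists_forall_ne_inr {α : Type*} (u : Fin m → α ⊕ Fin (m + 1)) :
    ∃ t, ∀ i, u i ≠ Sum.inr t := by
  by_contra! h
  choose i hi using h
  have hinj : Function.Injective i := fun t t' htt' => Sum.inr_injective <| by
    rw [← hi t, ← hi t', htt']
  simpa using Fintype.card_le_of_injective i hinj

theorem parPoint_reshare_of_ne_inr {t : Fin (m + 1)} {z : ParSource c m} (hz : z ≠ Sum.inr t)
    (s : Fin d → Bool) (r : (Fin d → Bool) → Fin c → Bool) (sh : Fin (m + 1) → Fin d → Bool) :
    parPoint r (reshare t s sh) z = parPoint r sh z := by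
  rcases z with x | t'
  · rfl
  · simp only [parPoint, Sum.map_inr, reshare_apply_of_ne fun h => hz (congrArg Sum.inr h)]

variable {Tr Q : Type*} {Ai : Fin n → Type}

/-- The curator does not see the share `t`, and the answers of the agents that hold shares can be
drawn afresh, so the transcript of one instance determines those for all values of the secret. -/
theorem exists_decoder (Cur : (Fin m → ParPoint c d m) → PMF Tr) (query : Tr → Fin n → Q)
    (R : ∀ i, Q → ParPoint c d m → PMF (Ai i)) (out : Tr → (∀ i, Ai i) → PMF (Fin c → Bool))
    (sh : Fin (m + 1) → Fin d → Bool)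
    {u : Fin m → ParSource c m} (v : Fin n → ParSource c m) {t : Fin (m + 1)}
    (ht : ∀ i, u i ≠ Sum.inr t) :
    ∃ G : (Fin d → Bool) → Tr × (∀ i, Ai i) → PMF (Fin c → Bool), ∀ r s,
      (transcript Cur query R (parPoint r sh ∘ u) (parPoint r sh ∘ v)).bind (G s) =
        (transcript Cur query R (parPoint r (reshare t s sh) ∘ u)
          (parPoint r (reshare t s sh) ∘ v)).bind fun w => out w.1 w.2 := by
  let resample (s : Fin d → Bool) (tr : Tr) (i : Fin n) (a : Ai i) : PMF (Ai i) :=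
    Sum.elim (fun _ => PMF.pure a)
      (fun t' => R i (query tr i) (Sum.inr (t', reshare t s sh t'))) (v i)
  refine ⟨fun s w => (pmfPi n fun i => resample s w.1 i (w.2 i)).bind (out w.1), fun r s => ?_⟩
  have hcurator : parPoint r (reshare t s sh) ∘ u = parPoint r sh ∘ u :=
    funext fun i => parPoint_reshare_of_ne_inr (ht i) s r sh
  rw [hcurator]
  refine transcript_bind_resample _ (fun tr i => ?_) out
  simp only [resample, Function.comp_apply, parPoint]
  rcases v i with x | t'
  · exact PMF.bind_pure _
  · exact PMF.bind_const _ _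

theorem two_pow_mul_le_of_le_mean_success {ε : ℝ} {Cur : (Fin m → ParPoint c d m) → PMF Tr}
    {query : Tr → Fin n → Q} {R : ∀ i, Q → ParPoint c d m → PMF (Ai i)}
    (hCur : DPAlg ε Cur) (hR : ∀ i q, DPRand ε (R i q))
    (out : Tr → (∀ i, Ai i) → PMF (Fin c → Bool)) (u : Fin m → ParSource c m)
    (v : Fin n → ParSource c m) {l q : ℝ} (hl : 0 ≤ l)
    (hq : ENNReal.ofReal q ≤ mean (uniformOfFintype _)
      fun p : (Fin (m + 1) → Fin d → Bool) × ((Fin d → Bool) → Fin c → Bool) =>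
        ((transcript Cur query R (parPoint p.2 p.1 ∘ u) (parPoint p.2 p.1 ∘ v)).bind
          fun w => out w.1 w.2) (p.2 (sOf p.1))) :
    2 ^ d * (q * l) ≤ (m + n) * ε + 2 ^ d * ((Real.exp l - 1) / 2 ^ c) := by
  obtain ⟨t, ht⟩ := exists_forall_ne_inr u
  rw [mean_uniformOfFintype_prod, ← mean_uniformOfFintype_reshare t] at hq
  obtain ⟨sh, hsh⟩ := exists_le_of_le_mean ENNReal.ofReal_ne_top hq
  obtain ⟨G, hG⟩ := exists_decoder Cur query R out sh v ht
  simp only [sOf_reshare, ← hG] at hsh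
  simpa using mul_card_le_of_le_mean_decode (fun r w => transcript_apply_le hCur hR
    (parPoint r sh ∘ u) (parPoint default sh ∘ u) (parPoint r sh ∘ v) (parPoint default sh ∘ v) w)
    hl G hsh

end ParityTask

theorem three_halves_pow_sub_one_div_two_pow_le (c : ℕ) :
    ((3 / 2 : ℝ) ^ c - 1) / 2 ^ c ≤ c / 4 := by
  have hdiff : (3 / 4 : ℝ) ^ c - (1 / 2) ^ c ≤ c / 4 := by
    induction c with
    | zero => simp
    | succ c ih =>
      have hhalf : (1 / 2 : ℝ) ^ c ≤ 1 := pow_le_one₀ (by norm_num) (by norm_num)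
      rw [pow_succ, pow_succ, Nat.cast_succ]
      linarith [c.cast_nonneg (α := ℝ)]
  rwa [sub_div, ← div_pow, ← one_div_pow, show (3 / 2 / 2 : ℝ) = 3 / 4 by norm_num]

theorem two_fifths_le_log_three_halves : 2 / 5 ≤ Real.log (3 / 2) := by
  have h := Real.le_log_one_add_of_nonneg (x := 1 / 2) (by norm_num)
  norm_num at h
  exact h

theorem stmt_9_general {c d m n : ℕ} {ε : ℝ} {Tr Q Coin : Type*} {Ai : Fin n → Type}
    {coinD : PMF Coin} {Cur : (Fin m → ParPoint c d m) → PMF Tr} {qmap : Coin → Tr → Fin n → Q}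
    {R : ∀ i : Fin n, Q → ParPoint c d m → PMF (Ai i)}
    {out : Coin → Tr → (∀ i, Ai i) → PMF (Fin c → Bool)}
    (hCur : DPAlg ε Cur) (hR : ∀ i q, DPRand ε (R i q))
    (hsucc : ∀ (r : (Fin d → Bool) → Fin c → Bool) (sh : Fin (m + 1) → Fin d → Bool),
      ENNReal.ofReal (3 / 4 : ℝ) ≤
        prOf ((iid (oneOutDist c d m r sh) m).bind fun xs =>
               (iid (oneOutDist c d m r sh) n).bind fun ys =>
               coinD.bind fun ρ =>
               (Cur xs).bind fun tr =>
               (pmfPi n (fun i => R i (qmap ρ tr i) (ys i))).bind fun ans =>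
               out ρ tr ans)
          {r (sOf sh)}) :
    (c : ℝ) * 2 ^ d ≤ 20 * ((m + n) * ε) := by
  let π := uniformOfFintype ((Fin (m + 1) → Fin d → Bool) × ((Fin d → Bool) → Fin c → Bool))
  have havg := (mean_const π _).symm.trans_le (mean_mono π fun p => hsucc p.2 p.1)
  simp only [prOf_singleton, oneOutDist_eq_map_parPoint, iid_map, PMF.bind_map] at havg
  obtain ⟨u, hu⟩ := exists_le_mean_of_le_mean_bind ENNReal.ofReal_ne_top havg
  obtain ⟨v, hv⟩ := exists_le_mean_of_le_mean_bind ENNReal.ofReal_ne_top hu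
  obtain ⟨ρ, hρ⟩ := exists_le_mean_of_le_mean_bind ENNReal.ofReal_ne_top hv
  have hlog := two_fifths_le_log_three_halves
  have hbound := two_pow_mul_le_of_le_mean_success (l := c * Real.log (3 / 2)) hCur hR (out ρ) u v
    (by positivity) (by simpa only [transcript_bind] using hρ)
  rw [Real.exp_nat_mul, Real.exp_log (by norm_num)] at hbound
  have hexp : 2 ^ d * (((3 / 2 : ℝ) ^ c - 1) / 2 ^ c) ≤ 2 ^ d * (c / 4) :=
    mul_le_mul_of_nonneg_left (three_halves_pow_sub_one_div_two_pow_le c) (by positivity)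
  have hlin : 2 ^ d * (c * (2 / 5)) ≤ 2 ^ d * (c * Real.log (3 / 2)) := by gcongr
  linarith

/-- there is a constant `C > 0` such that any `ε`-DP `(m,n)`-hybrid protocol
(`m < n`) solving the 1-out-of-`2^d`-parity task with success probability `3/4` on every
instance, in the curator-first-then-one-local-round communication pattern, must have
`n ≥ C·c·2^d/(d·ε)`. -/
theorem stmt_9 : ∃ C : ℝ, 0 < C ∧
    ∀ (c d m n : ℕ), m < n → ∀ ε : ℝ, 0 < ε →
    ∀ (Tr Q Coin : Type) (Ai : Fin n → Type) (coinD : PMF Coin)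
      (Cur : (Fin m → ParPoint c d m) → PMF Tr)
      (qmap : Coin → Tr → Fin n → Q)
      (R : ∀ i : Fin n, Q → ParPoint c d m → PMF (Ai i))
      (out : Coin → Tr → (∀ i, Ai i) → PMF (Fin c → Bool)),
      DPAlg ε Cur →
      (∀ i q, DPRand ε (R i q)) →
      (∀ (r : (Fin d → Bool) → Fin c → Bool) (sh : Fin (m + 1) → Fin d → Bool),
        ENNReal.ofReal (3 / 4 : ℝ) ≤
          prOf ((iid (oneOutDist c d m r sh) m).bind fun xs =>
                 (iid (oneOutDist c d m r sh) n).bind fun ys =>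
                 coinD.bind fun ρ =>
                 (Cur xs).bind fun tr =>
                 (pmfPi n (fun i => R i (qmap ρ tr i) (ys i))).bind fun ans =>
                 out ρ tr ans)
            {r (sOf sh)}) →
      C * (c : ℝ) * 2 ^ d / ((d : ℝ) * ε) ≤ (n : ℝ) := by
  refine ⟨1 / 40, by norm_num, fun c d m n hmn ε hε Tr Q Coin Ai coinD Cur qmap R out hCur hR
    hsucc => ?_⟩
  have hbound : (c : ℝ) * 2 ^ d ≤ 20 * ((m + n) * ε) := stmt_9_general hCur hR hsucc
  obtain rfl | hd := d.eq_zero_or_pos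
  · simp
  have hmn' : (m : ℝ) * ε ≤ n * ε := by gcongr
  have hd' : n * ε * 1 ≤ n * ε * d := by gcongr; exact_mod_cast hd
  rw [div_le_iff₀ (by positivity)]
  linarith
end

section
/- Let X be a set, C = {c_1,…,c_d} a class of d concepts X → {0,1}, α ∈ (0,1), ε > 0, and v ∈ ℕ such that no subset of X of size v+1 is shattered by C. Let n ≥ (64/α)·(v·ln(128/α) + ln 8). If there exists a non-interactive ε-differentially private protocol in the local model with n agents that solves the selection problem over {0,1}^d with accuracy α, then there exists a non-interactive ε-differentially private protocol in the local model with n agents, each holding one labeled example from X × {0,1}, that is a proper (4α, 1/4)-PAC learner for C (its output is always some c_j ∈ C). -/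
open scoped ENNReal

/-!
An agent holding the labeled example `(x, y)` uses as its selection input the bit vector whose
`k`-th bit says whether `c k x = y`. If the labels come from the concept `c j₀`, the `k`-th bit has
mean `1 - err (c k)`. The largest mean is therefore `1`, attained at `j₀`, so selection with
accuracy `α` outputs a concept of expected error at most `α`, and Markov's inequality concludes.
-/

section Probability

open MeasureTheory

variable {Y Z : Type*}

theorem one_sub_le_measureReal_le_div_of_integral_le {Ω : Type*} [MeasurableSpace Ω]
    {μ : Measure Ω} [IsProbabilityMeasure μ] {f : Ω → ℝ} {a β : ℝ} (ha : 0 < a) (hβ : 0 < β)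
    (hf_nonneg : 0 ≤ᵐ[μ] f) (hf_int : Integrable f μ) (hf : ∫ ω, f ω ∂μ ≤ a) :
    1 - β ≤ μ.real {ω | f ω ≤ a / β} := by
  have markov : μ.real {ω | a / β ≤ f ω} ≤ β := by
    have h := (mul_meas_ge_le_integral_of_nonneg hf_nonneg hf_int (a / β)).trans hf
    rwa [div_mul_eq_mul_div, div_le_iff₀ hβ, mul_le_mul_iff_right₀ ha] at h
  have cover : {ω | f ω ≤ a / β} ∪ {ω | a / β ≤ f ω} = Set.univ :=
    Set.eq_univ_of_forall fun ω => le_total (f ω) (a / β)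
  have union_bound := measureReal_union_le (μ := μ) {ω | f ω ≤ a / β} {ω | a / β ≤ f ω}
  rw [cover, probReal_univ] at union_bound
  linarith

theorem prOf_eq_toMeasure [MeasurableSpace Y] [MeasurableSingletonClass Y] (P : PMF Y)
    (T : Set Y) : prOf P T = P.toMeasure T :=
  (P.toMeasure_apply_eq_toOuterMeasure T).symm

theorem prOf_ne_top (P : PMF Y) (T : Set Y) : prOf P T ≠ ∞ := by
  let _ : MeasurableSpace Y := ⊤
  rw [prOf_eq_toMeasure]
  exact measure_ne_top _ _

theorem toReal_prOf_compl (P : PMF Y) (T : Set Y) :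
    (prOf P Tᶜ).toReal = 1 - (prOf P T).toReal := by
  let _ : MeasurableSpace Y := ⊤
  simp only [prOf_eq_toMeasure]
  exact probReal_compl_eq_one_sub MeasurableSpace.measurableSet_top

theorem prOf_map (P : PMF Z) (f : Z → Y) (T : Set Y) : prOf (P.map f) T = prOf P (f ⁻¹' T) :=
  PMF.toOuterMeasure_map_apply f P T

theorem sum_toReal_pmf_eq_one [Fintype Y] (P : PMF Y) : ∑ y, (P y).toReal = 1 := by
  let _ : MeasurableSpace Y := ⊤
  simpa using (P.integral_eq_sum fun _ => (1 : ℝ)).symm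

theorem ofReal_one_sub_le_prOf_le_div_of_sum_le [Fintype Y] (P : PMF Y) {f : Y → ℝ} {a β : ℝ}
    (ha : 0 < a) (hβ : 0 < β) (hf_nonneg : 0 ≤ f) (hf : ∑ y, (P y).toReal * f y ≤ a) :
    ENNReal.ofReal (1 - β) ≤ prOf P {y | f y ≤ a / β} := by
  let _ : MeasurableSpace Y := ⊤
  rw [ENNReal.ofReal_le_iff_le_toReal (prOf_ne_top P _), prOf_eq_toMeasure]
  refine one_sub_le_measureReal_le_div_of_integral_le ha hβ (ae_of_all _ hf_nonneg)
    .of_finite ?_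
  simpa only [PMF.integral_eq_sum, smul_eq_mul] using hf

theorem iid_map_s11 (D : PMF Z) (f : Z → Y) (m : ℕ) :
    iid (D.map f) m = (iid D m).map fun s i => f (s i) := by
  induction m with
  | zero => exact (congrArg PMF.pure (Subsingleton.elim _ _)).trans (PMF.pure_map _ _).symm
  | succ m ih =>
    have map_cons (s : Fin m → Z) (z : Z) :
        (Fin.cons (f z) fun i => f (s i) : Fin (m + 1) → Y) =
          fun i => f ((Fin.cons z s : Fin (m + 1) → Z) i) :=
      (Fin.comp_cons f z s).symm
    simp only [iid, ih, PMF.map_bind, PMF.bind_map, PMF.pure_map, Function.comp_def, map_cons]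

theorem errD_self (D : PMF Z) (h : Z → Y) : errD D h h = 0 := by
  simp [errD, prOf]

end Probability

section Protocol

variable {Y Z K : Type*} {n : ℕ} {M : Fin n → Type}

/-- The output distribution of the non-interactive protocol with local randomizers `R i` and referee
`sel`, run by `n` agents whose inputs are i.i.d. samples from `D`. -/
noncomputable def protocolOutput (R : ∀ i, Z → PMF (M i)) (sel : (∀ i, M i) → PMF K)
    (D : PMF Z) : PMF K :=
  (iid D n).bind fun s => (pmfPi n fun i => R i (s i)).bind sel

theorem protocolOutput_map (R : ∀ i, Y → PMF (M i)) (sel : (∀ i, M i) → PMF K) (f : Z → Y)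
    (D : PMF Z) :
    protocolOutput R sel (D.map f) = protocolOutput (fun i z => R i (f z)) sel D := by
  rw [protocolOutput, iid_map_s11, PMF.bind_map]
  rfl

theorem DPRand.comp {ε : ℝ} {R : Y → PMF Z} (hR : DPRand ε R) {W : Type*} (f : W → Y) :
    DPRand ε (R ∘ f) :=
  fun w w' => hR (f w) (f w')

end Protocol

section SelectionToLearning

variable {K X L : Type*}

/-- `A` solves the selection problem over `{0,1}^K` with accuracy `α`, where `A D` is the output
distribution of the algorithm on input distribution `D`: the coordinate it outputs has, in
expectation, mean within `α` of the largest one. -/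
def SolvesSelection [Fintype K] (α : ℝ) (A : PMF (K → Bool) → PMF K) : Prop :=
  ∀ D : PMF (K → Bool),
    (⨆ k : K, (prOf D {y | y k = true}).toReal) - α ≤
      ∑ j : K, (A D j).toReal * (prOf D {y | y j = true}).toReal

/-- The bit vector recording which concepts of the class `c` are consistent with a labeled example:
the input to selection that an agent derives from that example. -/
def agreement [DecidableEq L] (c : K → X → L) (z : X × L) (k : K) : Bool :=
  decide (c k z.1 = z.2)

theorem toReal_prOf_map_agreement [DecidableEq L] (c : K → X → L) (h : X → L) (D : PMF X) (k : K) :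
    (prOf (D.map fun x => agreement c (x, h x)) {y | y k = true}).toReal =
      1 - (errD D h (c k)).toReal := by
  have preimage_eq : (fun x => agreement c (x, h x)) ⁻¹' {y | y k = true} =
      {x | c k x ≠ h x}ᶜ := by
    ext x
    simp [agreement]
  rw [prOf_map, preimage_eq, toReal_prOf_compl, errD]

variable [Fintype K] {α : ℝ}

theorem SolvesSelection.sum_errD_le [DecidableEq L] {A : PMF (K → Bool) → PMF K}
    (hA : SolvesSelection α A) (c : K → X → L) (j₀ : K) (D : PMF X) :
    ∑ j, (A (D.map fun x => agreement c (x, c j₀ x)) j).toReal * (errD D (c j₀) (c j)).toReal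
      ≤ α := by
  have h := hA (D.map fun x => agreement c (x, c j₀ x))
  simp only [toReal_prOf_map_agreement, mul_sub, mul_one, Finset.sum_sub_distrib,
    sum_toReal_pmf_eq_one] at h
  have one_le_sup : 1 ≤ ⨆ k, (1 - (errD D (c j₀) (c k)).toReal) := by
    simpa [errD_self] using le_ciSup (f := fun k => 1 - (errD D (c j₀) (c k)).toReal)
      (Set.finite_range _).bddAbove j₀
  linarith

theorem SolvesSelection.ofReal_one_sub_le_prOf_errD_le [DecidableEq L]
    {A : PMF (K → Bool) → PMF K} (hA : SolvesSelection α A) {β : ℝ} (hα : 0 < α) (hβ : 0 < β)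
    (c : K → X → L) (j₀ : K) (D : PMF X) :
    ENNReal.ofReal (1 - β) ≤
      prOf (A (D.map fun x => agreement c (x, c j₀ x)))
        {j | errD D (c j₀) (c j) ≤ ENNReal.ofReal (α / β)} := by
  simp only [ENNReal.le_ofReal_iff_toReal_le (prOf_ne_top D _) (div_pos hα hβ).le, errD]
  exact ofReal_one_sub_le_prOf_le_div_of_sum_le _ hα hβ (fun _ => ENNReal.toReal_nonneg)
    (hA.sum_errD_le c j₀ D)

theorem stmt_11_general (c : K → X → L) {β ε : ℝ} (hα : 0 < α) (hβ : 0 < β) {n : ℕ}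
    {M : Fin n → Type} {R : ∀ i, (K → Bool) → PMF (M i)} {sel : (∀ i, M i) → PMF K}
    (hR : ∀ i, DPRand ε (R i)) (hSel : SolvesSelection α (protocolOutput R sel)) :
    ∃ R' : ∀ i, X × L → PMF (M i), (∀ i, DPRand ε (R' i)) ∧
      ∀ (j₀ : K) (D : PMF X),
        ENNReal.ofReal (1 - β) ≤
          prOf (protocolOutput (fun i x => R' i (x, c j₀ x)) sel D)
            {j | errD D (c j₀) (c j) ≤ ENNReal.ofReal (α / β)} := by
  classical
  refine ⟨fun i => R i ∘ agreement c, fun i => (hR i).comp _, fun j₀ D => ?_⟩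
  have h := hSel.ofReal_one_sub_le_prOf_errD_le hα hβ c j₀ D
  rwa [protocolOutput_map] at h

end SelectionToLearning

/-- from a non-interactive `ε`-DP local-model protocol with `n` agents solving the
selection problem over `{0,1}^d` with accuracy `α`, provided no subset of `X` of size `v+1` is
shattered by the class `C = {c_1,…,c_d}` and `n ≥ (64/α)·(v·ln(128/α) + ln 8)`, one obtains a
non-interactive `ε`-DP local-model protocol with `n` agents (each holding one labeled example)
that properly `(4α, 1/4)`-PAC learns `C` — its output is an index `j`, interpreted as the
hypothesis `c_j ∈ C`. -/
theorem stmt_11 (X : Type) (d : ℕ) (c : Fin d → X → Bool) (α ε : ℝ) (v n : ℕ)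
    (hα0 : 0 < α) (hα1 : α < 1) (hε : 0 < ε)
    (hVC : ∀ S : Finset X, S.card = v + 1 →
      ¬ ∀ g : X → Bool, ∃ j : Fin d, ∀ x ∈ S, c j x = g x)
    (hn : (64 / α) * ((v : ℝ) * Real.log (128 / α) + Real.log 8) ≤ (n : ℝ))
    (Mi : Fin n → Type)
    (R : ∀ i : Fin n, (Fin d → Bool) → PMF (Mi i))
    (sel : (∀ i, Mi i) → PMF (Fin d))
    (hR : ∀ i, DPRand ε (R i))
    (hSel : ∀ D : PMF (Fin d → Bool),
      (⨆ k : Fin d, (prOf D {y | y k = true}).toReal) - α ≤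
        ∑ j : Fin d,
          (((iid D n).bind fun ys => (pmfPi n fun i => R i (ys i)).bind sel) j).toReal *
            (prOf D {y | y j = true}).toReal) :
    ∃ (Mi' : Fin n → Type) (R' : ∀ i : Fin n, X × Bool → PMF (Mi' i))
      (sel' : (∀ i, Mi' i) → PMF (Fin d)),
      (∀ i, DPRand ε (R' i)) ∧
      ∀ (j0 : Fin d) (D : PMF X),
        ENNReal.ofReal (3 / 4 : ℝ) ≤
          prOf ((iid D n).bind fun ys =>
                 (pmfPi n fun i => R' i (ys i, c j0 (ys i))).bind sel')
            {j | errD D (c j0) (c j) ≤ ENNReal.ofReal (4 * α)} := by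
  obtain ⟨R', hR', hlearn⟩ := stmt_11_general c hα0 (β := 1 / 4) (by norm_num) hR hSel
  rw [show (1 - 1 / 4 : ℝ) = 3 / 4 by norm_num, show α / (1 / 4) = 4 * α by ring] at hlearn
  exact ⟨Mi, R', sel, hR', hlearn⟩
end
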